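/- Eigenvalue characterization via the Prüfer phase: a real number λ is an eigenvalue of H^(N) if and only if φ_N(λ) ∈ {π/2, −π/2}, i.e. if and only if the Prüfer phase of the transfer-matrix vector M_N(λ)(1,0)ᵀ is congruent to π/2 modulo π. -/

import Mathlib

/-- The polynomials `u_k(λ)` defined by `u_0 = 0`, `u_1 = 1`,
`u_{k+1}(λ) = (V_k − λ) u_k(λ) − u_{k−1}(λ)`. -/
noncomputable def andersonU (V : ℕ → ℝ) : ℕ → ℝ → ℝ
  | 0 => fun _ => 0
  | 1 => fun _ => 1
  | (k+2) => fun l => (V (k+1) - l) * andersonU V (k+1) l - andersonU V k l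

/-- The Anderson Hamiltonian on `[1, N]`. -/
def andersonH (N : ℕ) (V : ℕ → ℝ) : Matrix (Fin N) (Fin N) ℝ :=
  Matrix.of fun i j =>
    if (i : ℕ) = (j : ℕ) then V ((i : ℕ) + 1)
    else if (i : ℕ) + 1 = (j : ℕ) ∨ (j : ℕ) + 1 = (i : ℕ) then 1 else 0

/-- The Prüfer phase `φ_k(λ) = arg(u_{k+1}(λ) + i·u_k(λ))`. -/
noncomputable def prueferPhi (V : ℕ → ℝ) (k : ℕ) (l : ℝ) : ℝ :=
  Complex.arg (((andersonU V (k + 1) l : ℝ) : ℂ) + (andersonU V k l : ℝ) * Complex.I)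

/-!
Put `ψ_k = (-1)^(k+1) u_k(λ)`. The sign turns the recurrence of `u` into the eigenvalue equation
`ψ_{k-1} + V_k ψ_k + ψ_{k+1} = λ ψ_k`, with `ψ_0 = 0` and `ψ_1 = 1`. A vector `x`, extended by zero
to the sites `0` and `N + 1`, is an eigenvector exactly when it satisfies the same equation on
`1, …, N`, so it is then a multiple of `ψ`. The only remaining condition is the right boundary
value `ψ_{N+1} = 0`, that is `u_{N+1}(λ) = 0`, which says that the nonzero vector
`u_{N+1} + i u_N` lies on the imaginary axis.
-/

section DirichletExtension

variable {R : Type*} {N : ℕ}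

/-- The extension of a vector on the sites `1, …, N` by zero, as in Dirichlet boundary conditions.
The coordinate `j : Fin N` is the value at the site `j + 1`. -/
def dirichletExtension [Zero R] (x : Fin N → R) : ℕ → R
  | 0 => 0
  | k + 1 => if h : k < N then x ⟨k, h⟩ else 0

@[simp]
lemma dirichletExtension_zero [Zero R] (x : Fin N → R) : dirichletExtension x 0 = 0 := rfl

@[simp]
lemma dirichletExtension_val_succ [Zero R] (x : Fin N → R) (j : Fin N) :
    dirichletExtension x (j + 1) = x j := by
  simp [dirichletExtension]

@[simp]
lemma dirichletExtension_last [Zero R] (x : Fin N → R) : dirichletExtension x (N + 1) = 0 := by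
  simp [dirichletExtension]

lemma dirichletExtension_restrict [Zero R] {f : ℕ → R} (h_left : f 0 = 0) (h_right : f (N + 1) = 0)
    {k : ℕ} (hk : k ≤ N + 1) : dirichletExtension (fun j : Fin N => f (j + 1)) k = f k := by
  rcases k with _ | k
  · exact h_left.symm
  · rcases (Nat.le_of_succ_le_succ hk).lt_or_eq with hkN | rfl
    · simp [dirichletExtension, hkN]
    · rw [dirichletExtension_last, h_right]

lemma sum_mul_eq_sum_range_mul_dirichletExtension [NonUnitalNonAssocSemiring R] (c : ℕ → R)
    (x : Fin N → R) :
    ∑ j : Fin N, c (j + 1) * x j = ∑ k ∈ Finset.range (N + 2), c k * dirichletExtension x k := by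
  rw [Finset.sum_range_succ, Finset.sum_range_succ', dirichletExtension_zero,
    dirichletExtension_last, mul_zero, mul_zero, add_zero, add_zero, ← Fin.sum_univ_eq_sum_range]
  simp only [dirichletExtension_val_succ]

end DirichletExtension

lemma eq_of_second_order_recurrence {α : Type*} {F : ℕ → α → α → α} {f g : ℕ → α} {N : ℕ}
    (hf : ∀ k < N, f (k + 2) = F k (f k) (f (k + 1)))
    (hg : ∀ k < N, g (k + 2) = F k (g k) (g (k + 1)))
    (h_zero : f 0 = g 0) (h_one : f 1 = g 1) {k : ℕ} (hk : k ≤ N + 1) : f k = g k := by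
  induction k using Nat.twoStepInduction with
  | zero => exact h_zero
  | one => exact h_one
  | more k ih ih_succ =>
    rw [hf k (by omega), hg k (by omega), ih (by omega), ih_succ (by omega)]

lemma arg_eq_pi_div_two_or_eq_neg_pi_div_two_iff {z : ℂ} (hz : z ≠ 0) :
    (z.arg = Real.pi / 2 ∨ z.arg = -(Real.pi / 2)) ↔ z.re = 0 := by
  rw [Complex.arg_eq_pi_div_two_iff, Complex.arg_eq_neg_pi_div_two_iff, ← and_or_left,
    and_iff_left_iff_imp]
  intro h_re
  have h_im : z.im ≠ 0 := fun h_im => hz (Complex.ext h_re h_im)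
  exact h_im.lt_or_gt.symm

variable (V : ℕ → ℝ) (l : ℝ)

lemma andersonU_succ_succ (k : ℕ) :
    andersonU V (k + 2) l = (V (k + 1) - l) * andersonU V (k + 1) l - andersonU V k l := rfl

variable {V l} in
lemma andersonU_ne_zero_of_andersonU_succ_eq_zero {k : ℕ} (h : andersonU V (k + 1) l = 0) :
    andersonU V k l ≠ 0 := by
  induction k with
  | zero => exact absurd h one_ne_zero
  | succ k ih =>
    intro h_succ
    refine ih h_succ ?_
    simpa only [andersonU_succ_succ, h_succ, mul_zero, zero_sub, neg_eq_zero] using h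

lemma prueferPhi_eq_pi_div_two_or_eq_neg_pi_div_two_iff (k : ℕ) :
    (prueferPhi V k l = Real.pi / 2 ∨ prueferPhi V k l = -(Real.pi / 2)) ↔
      andersonU V (k + 1) l = 0 := by
  have h_ne : (andersonU V (k + 1) l + andersonU V k l * Complex.I : ℂ) ≠ 0 := by
    rw [← Complex.mk_eq_add_mul_I]
    intro h
    exact andersonU_ne_zero_of_andersonU_succ_eq_zero
      (congrArg Complex.re h) (congrArg Complex.im h)
  rw [prueferPhi, arg_eq_pi_div_two_or_eq_neg_pi_div_two_iff h_ne, ← Complex.mk_eq_add_mul_I]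

/-- The solution of `ψ_{k-1} + V_k ψ_k + ψ_{k+1} = λ ψ_k` with `ψ_0 = 0` and `ψ_1 = 1`. The sign
accounts for `u` being defined with the potential term `V_k - λ` in place of `λ - V_k`. -/
noncomputable def dirichletSolution (k : ℕ) : ℝ := (-1) ^ (k + 1) * andersonU V k l

@[simp]
lemma dirichletSolution_zero : dirichletSolution V l 0 = 0 := by
  simp [dirichletSolution, andersonU]

@[simp]
lemma dirichletSolution_one : dirichletSolution V l 1 = 1 := by
  simp [dirichletSolution, andersonU]

lemma dirichletSolution_succ_succ (k : ℕ) :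
    dirichletSolution V l (k + 2) =
      (l - V (k + 1)) * dirichletSolution V l (k + 1) - dirichletSolution V l k := by
  simp only [dirichletSolution, andersonU_succ_succ]
  ring

variable {V l} in
lemma dirichletSolution_eq_zero_iff {k : ℕ} :
    dirichletSolution V l k = 0 ↔ andersonU V k l = 0 := by
  simp [dirichletSolution]

variable {N : ℕ}

lemma andersonH_apply (i j : Fin N) :
    andersonH N V i j = (if (j : ℕ) + 1 = i then 1 else 0) +
      (if (j : ℕ) + 1 = i + 1 then V (i + 1) else 0) + (if (j : ℕ) + 1 = i + 2 then 1 else 0) := by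
  rw [andersonH, Matrix.of_apply]
  grind

lemma andersonH_mulVec_apply (x : Fin N → ℝ) (i : Fin N) :
    (andersonH N V).mulVec x i = dirichletExtension x i +
      V (i + 1) * dirichletExtension x (i + 1) + dirichletExtension x (i + 2) := by
  simp only [Matrix.mulVec, dotProduct, andersonH_apply]
  rw [sum_mul_eq_sum_range_mul_dirichletExtension fun k =>
    (if k = i then 1 else 0) + (if k = i + 1 then V (i + 1) else 0) + (if k = i + 2 then 1 else 0)]
  have h_mem : ∀ k ≤ (i : ℕ) + 2, k ∈ Finset.range (N + 2) := by grind
  simp only [add_mul, ite_mul, one_mul, zero_mul, Finset.sum_add_distrib, Finset.sum_ite_eq']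
  rw [if_pos (h_mem _ (by omega)), if_pos (h_mem _ (by omega)), if_pos (h_mem _ le_rfl)]

lemma andersonH_mulVec_eq_smul_iff (x : Fin N → ℝ) :
    (andersonH N V).mulVec x = l • x ↔ ∀ k < N, dirichletExtension x (k + 2) =
      (l - V (k + 1)) * dirichletExtension x (k + 1) - dirichletExtension x k := by
  rw [funext_iff, Fin.forall_iff]
  refine forall₂_congr fun k hk => ?_
  rw [andersonH_mulVec_apply, Pi.smul_apply, smul_eq_mul, ← dirichletExtension_val_succ x ⟨k, hk⟩]
  constructor <;> intro h <;> linarith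

variable {V l} in
lemma dirichletExtension_eq_mul_dirichletSolution {x : Fin N → ℝ}
    (hx : (andersonH N V).mulVec x = l • x) {k : ℕ} (hk : k ≤ N + 1) :
    dirichletExtension x k = dirichletExtension x 1 * dirichletSolution V l k := by
  refine eq_of_second_order_recurrence (F := fun k a b => (l - V (k + 1)) * b - a)
    (g := fun k => dirichletExtension x 1 * dirichletSolution V l k)
    ((andersonH_mulVec_eq_smul_iff V l x).1 hx) (fun k _ => ?_) (by simp) (by simp) hk
  simp only [dirichletSolution_succ_succ]
  ring

variable {V l} in
lemma dirichletSolution_eq_zero_of_eigenvector {x : Fin N → ℝ} (hx_ne : x ≠ 0)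
    (hx : (andersonH N V).mulVec x = l • x) : dirichletSolution V l (N + 1) = 0 := by
  have h_one : dirichletExtension x 1 ≠ 0 := by
    intro h
    refine hx_ne (funext fun j => ?_)
    rw [← dirichletExtension_val_succ x j,
      dirichletExtension_eq_mul_dirichletSolution hx (by omega), h, zero_mul, Pi.zero_apply]
  have h_last := dirichletExtension_eq_mul_dirichletSolution hx le_rfl
  rw [dirichletExtension_last, zero_eq_mul] at h_last
  exact h_last.resolve_left h_one

variable {V l} in
lemma andersonH_mulVec_dirichletSolution (h : dirichletSolution V l (N + 1) = 0) :
    (andersonH N V).mulVec (fun j => dirichletSolution V l (j + 1)) =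
      l • fun j : Fin N => dirichletSolution V l (j + 1) := by
  have h_ext {k : ℕ} (hk : k ≤ N + 1) :=
    dirichletExtension_restrict (dirichletSolution_zero V l) h hk
  rw [andersonH_mulVec_eq_smul_iff]
  intro k hk
  rw [h_ext (by omega), h_ext (by omega), h_ext (by omega), dirichletSolution_succ_succ]

lemma exists_eigenvector_iff_dirichletSolution_eq_zero :
    (∃ x : Fin N → ℝ, x ≠ 0 ∧ (andersonH N V).mulVec x = l • x) ↔
      dirichletSolution V l (N + 1) = 0 := by
  constructor
  · rintro ⟨x, hx_ne, hx⟩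
    exact dirichletSolution_eq_zero_of_eigenvector hx_ne hx
  · intro h
    have hN : 0 < N := Nat.pos_of_ne_zero (by rintro rfl; simp at h)
    refine ⟨fun j => dirichletSolution V l (j + 1), fun h_zero => ?_,
      andersonH_mulVec_dirichletSolution h⟩
    simpa using congrFun h_zero ⟨0, hN⟩

/-- eigenvalue characterization via the Prüfer phase: `λ` is an
eigenvalue of `H^(N)` iff `φ_N(λ) ∈ {π/2, −π/2}`. -/
theorem eigenvalue_iff_prufer_phase (N : ℕ) (hN : 1 ≤ N) (V : ℕ → ℝ) (l : ℝ) :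
    (∃ x : Fin N → ℝ, x ≠ 0 ∧ (andersonH N V).mulVec x = l • x) ↔
      (prueferPhi V N l = Real.pi / 2 ∨ prueferPhi V N l = -(Real.pi / 2)) := by
  rw [exists_eigenvector_iff_dirichletSolution_eq_zero, dirichletSolution_eq_zero_iff,
    prueferPhi_eq_pi_div_two_or_eq_neg_pi_div_two_iff]
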